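/- arXiv:math/0406335 — 2 statements merged into one kernel-verified Lean document; each statement's English description precedes it below -/
import Mathlib

section
/- Fix an integer ℓ ≥ 2. There is a constant C = C(ℓ) > 0 such that for all real x > e^{e^e}, the number of integers 16 ≤ n ≤ x with f_ℓ(n) > (log log n)² is at most C·x/(log log x). In particular, f_ℓ(n) ≤ (log log n)² for almost all n. -/
/-!
The bound is Markov's inequality applied to the mean value `∑_{n ≤ x} f_ℓ(n) ≪ x log log x`: for
`√x < n ≤ x` the threshold `(log log n)²` is at least `(log log x)² / 4`, and there are only
`√x ≤ x / log log x` integers up to `√x`.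

For the mean value, fix a prime `p ∣ ℓ`. Since `v_p(φ(n)) ≤ v_p(n) + ∑_{q ∣ n} v_p(q - 1)`, it
suffices to show `∑_{q ≤ N} v_p(q - 1) / q ≪ log log N`, i.e. to sum
`A_k = ∑_{q ≤ N, q ≡ 1 mod p^k} 1 / q` over `k ≥ 1`.

* If `p^k` exceeds a power of `log N`, discarding primality gives `A_k ≤ (1 + log N) / p^k`, and
  these terms contribute `O(1)` (`sum_inv_primesOne_le_trivial`).
* In general `A_k ≪ (log log N) / φ(p^k) + O(1)` (`sum_inv_primesOne_le`). The additive `O(1)` is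
  affordable, because only `O(log log N)` values of `k` remain.

The second estimate, for a modulus `d`, replaces a sieve bound such as Brun–Titchmarsh. For real
`s > 1`, Euler products and orthogonality give
`φ(d) ∑_{q ≡ 1 mod d} q^{-s} ≤ ∑_χ log |L(s, χ)|`, where the primes `q` in the other classes
contribute non-negatively. The principal character contributes at most `log (1 + 1 / (s - 1))`. For
`χ ≠ 1`, `log |L| ≤ |L|² / 2`, and `L(s, χ)` is within `1` of its partial sum over `n < d`, whose
mean square over all `χ` is `∑_{n < d, (n, d) = 1} n^{-2s} ≤ ζ(2)`. Hence the nonprincipal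
characters contribute `O(φ(d))`. Taking `s = 1 + 1 / log N` makes `q^{-s}` comparable with `1 / q`
for all `q ≤ N`.
-/

/-- `fAux ℓ n = f_ℓ(n) = Σ_{p ∣ ℓ} v_p(φ(n)) log p = log(φ(n)/φ(n)_{(ℓ)})`. -/
noncomputable def fAux (ℓ n : ℕ) : ℝ :=
  ∑ p ∈ ℓ.primeFactors, ((Nat.totient n).factorization p : ℝ) * Real.log p

/-! ### Logarithms of `L`-functions and primes congruent to `1` -/

open Complex in
lemma natCast_cpow_neg_ofReal (n : ℕ) (s : ℝ) :
    (n : ℂ) ^ (-(s : ℂ)) = (((n : ℝ) ^ (-s) : ℝ) : ℂ) := by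
  rw [ofReal_cpow n.cast_nonneg]; simp

/-- The local factor at `q`: expanding `-log (1 - χ(q) q^{-s})` as a power series and summing over
`χ` makes every term non-negative, by orthogonality, and the linear term is the left-hand side. -/
lemma prime_term_lower_bound (d : ℕ) [NeZero d] {s : ℝ} (hs : 1 < s) {q : ℕ} (hq : 2 ≤ q) :
    (if (q : ZMod d) = 1 then (d.totient : ℝ) * (q : ℝ) ^ (-s) else 0) ≤
      ∑ χ : DirichletCharacter ℂ d, (-Complex.log (1 - χ q * (q : ℂ) ^ (-(s : ℂ)))).re := by
  rw [natCast_cpow_neg_ofReal]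
  set t : ℝ := (q : ℝ) ^ (-s) with ht
  have hq1 : (1 : ℝ) < q := by exact_mod_cast hq
  have ht0 : 0 ≤ t := by positivity
  have ht1 : t < 1 := Real.rpow_lt_one_of_one_lt_of_neg hq1 (by linarith)
  have hz (χ : DirichletCharacter ℂ d) : ‖χ q * (t : ℂ)‖ < 1 := by
    rw [norm_mul, Complex.norm_real, Real.norm_of_nonneg ht0]
    exact (mul_le_of_le_one_left ht0 (χ.norm_le_one _)).trans_lt ht1
  have key := hasSum_sum (s := Finset.univ) fun (χ : DirichletCharacter ℂ d) _ ↦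
    Complex.hasSum_re (Complex.hasSum_taylorSeries_neg_log (hz χ))
  have coeff (m : ℕ) : ∑ χ : DirichletCharacter ℂ d, ((χ q * (t : ℂ)) ^ m / m).re =
      (if ((q : ZMod d) ^ m) = 1 then (d.totient : ℝ) else 0) * (t ^ m / m) := by
    rw [← Complex.re_sum]
    have : ∑ χ : DirichletCharacter ℂ d, (χ q * (t : ℂ)) ^ m / m =
        (((if ((q : ZMod d) ^ m) = 1 then (d.totient : ℝ) else 0) * (t ^ m / m) : ℝ) : ℂ) := by
      simp_rw [mul_pow, ← map_pow, mul_div_assoc]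
      rw [← Finset.sum_mul, DirichletCharacter.sum_characters_eq]
      push_cast
      split_ifs <;> simp
    rw [this, Complex.ofReal_re]
  simp_rw [coeff] at key
  have h1 := le_hasSum key 1 (fun m _ ↦ by split_ifs <;> positivity)
  simpa using h1

/-- Sum of `prime_term_lower_bound` over all primes; those outside `F` contribute non-negatively. -/
lemma totient_mul_sum_le_sum_log (d : ℕ) [NeZero d] {s : ℝ} (hs : 1 < s) (F : Finset ℕ)
    (hF : ∀ q ∈ F, q.Prime ∧ (q : ZMod d) = 1) :
    (d.totient : ℝ) * ∑ q ∈ F, (q : ℝ) ^ (-s) ≤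
      ∑ χ : DirichletCharacter ℂ d, Real.log ‖LSeries (fun n ↦ χ n) s‖ := by
  have hs' : 1 < (s : ℂ).re := by simpa
  have key := hasSum_sum (s := Finset.univ) fun (χ : DirichletCharacter ℂ d) _ ↦
    Complex.hasSum_re (DirichletCharacter.summable_neg_log_one_sub_mul_prime_cpow χ hs').hasSum
  have hlog (χ : DirichletCharacter ℂ d) : Real.log ‖LSeries (fun n ↦ χ n) s‖ =
      (∑' p : Nat.Primes, -Complex.log (1 - χ p * (p : ℂ) ^ (-(s : ℂ)))).re := by
    rw [← DirichletCharacter.LSeries_eulerProduct_exp_log χ hs', Complex.norm_exp, Real.log_exp]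
  simp_rw [hlog]
  let G : Finset Nat.Primes := F.subtype Nat.Prime
  refine le_trans ?_ (sum_le_hasSum G (fun p _ ↦ ?_) key)
  · rw [Finset.mul_sum]
    calc ∑ q ∈ F, (d.totient : ℝ) * (q : ℝ) ^ (-s)
        = ∑ p ∈ G, (d.totient : ℝ) * ((p : ℕ) : ℝ) ^ (-s) := by
          exact (Finset.sum_subtype_of_mem (fun q : ℕ ↦ (d.totient : ℝ) * (q : ℝ) ^ (-s))
            (fun q hq ↦ (hF q hq).1)).symm
      _ ≤ _ := by
          refine Finset.sum_le_sum fun p hp ↦ ?_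
          have := prime_term_lower_bound d hs p.2.two_le
          rwa [if_pos (hF p (Finset.mem_subtype.mp hp)).2] at this
  · refine le_trans ?_ (prime_term_lower_bound d hs p.2.two_le)
    split_ifs <;> positivity

lemma sum_range_eq_sum_zmod (d : ℕ) [NeZero d] {M : Type*} [AddCommMonoid M] (g : ZMod d → ℕ → M) :
    ∑ a ∈ Finset.range d, g a a = ∑ z : ZMod d, g z z.val := by
  refine Finset.sum_nbij' (fun a ↦ (a : ZMod d)) ZMod.val (by simp) ?_ ?_ (by simp) ?_
  · intro z _; exact Finset.mem_range.mpr (ZMod.val_lt z)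
  · intro a ha; exact ZMod.val_cast_of_lt (Finset.mem_range.mp ha)
  · intro a ha; rw [ZMod.val_cast_of_lt (Finset.mem_range.mp ha)]

/-! ### Nonprincipal characters: truncation and mean square -/

/-- Blocks of `d` consecutive terms are compared with the constant weight at the start of the block,
whose contribution cancels because `χ` sums to `0` over a period; the differences telescope. -/
lemma partial_sum_sub_le (d : ℕ) [NeZero d] {s : ℝ} (hs : 1 < s) {χ : DirichletCharacter ℂ d}
    (hχ : χ ≠ 1) (J : ℕ) :
    ‖∑ n ∈ Finset.range (d * (J + 1)), χ n * (((n : ℝ) ^ (-s) : ℝ) : ℂ) -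
      ∑ n ∈ Finset.range d, χ n * (((n : ℝ) ^ (-s) : ℝ) : ℂ)‖ ≤
      d * ((d : ℝ) ^ (-s) - ((d * (J + 1) : ℕ) : ℝ) ^ (-s)) := by
  have hd : (0 : ℝ) < d := by exact_mod_cast NeZero.pos d
  induction J with
  | zero => simp
  | succ J ih =>
    have hzero : ∑ a ∈ Finset.range d, χ a = 0 := by
      rw [sum_range_eq_sum_zmod d (fun z _ ↦ χ z)]
      exact MulChar.sum_eq_zero_of_ne_one hχ
    set N := d * (J + 1) with hN
    have hNpos : (0 : ℝ) < N := by rw [hN]; push_cast; positivity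
    have hsucc : d * (J + 1 + 1) = N + d := by rw [hN]; ring
    have hblock : ‖∑ a ∈ Finset.range d, χ ((N + a : ℕ) : ZMod d) *
        ((((N + a : ℕ) : ℝ) ^ (-s) : ℝ) : ℂ)‖ ≤
        d * ((N : ℝ) ^ (-s) - ((N + d : ℕ) : ℝ) ^ (-s)) := by
      have h1 : ∑ a ∈ Finset.range d, χ ((N + a : ℕ) : ZMod d) *
          ((((N + a : ℕ) : ℝ) ^ (-s) : ℝ) : ℂ) =
          ∑ a ∈ Finset.range d, χ a *
            ((((N + a : ℕ) : ℝ) ^ (-s) - (N : ℝ) ^ (-s) : ℝ) : ℂ) := by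
        simp_rw [Complex.ofReal_sub, mul_sub, Finset.sum_sub_distrib, ← Finset.sum_mul, hzero]
        simp [hN]
      rw [h1]
      refine (norm_sum_le _ _).trans ?_
      calc _ ≤ ∑ a ∈ Finset.range d, ((N : ℝ) ^ (-s) - ((N + d : ℕ) : ℝ) ^ (-s)) := by
            refine Finset.sum_le_sum fun a ha ↦ ?_
            have ha := Finset.mem_range.mp ha
            have e1 : ((N + a : ℕ) : ℝ) ^ (-s) ≤ (N : ℝ) ^ (-s) :=
              Real.rpow_le_rpow_of_nonpos hNpos (by push_cast; linarith [a.cast_nonneg (α := ℝ)])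
                (by linarith)
            have e2 : ((N + d : ℕ) : ℝ) ^ (-s) ≤ ((N + a : ℕ) : ℝ) ^ (-s) :=
              Real.rpow_le_rpow_of_nonpos (by push_cast; positivity)
                (by exact_mod_cast (by omega)) (by linarith)
            rw [norm_mul, Complex.norm_real, Real.norm_of_nonpos (by linarith)]
            refine (mul_le_of_le_one_left (by linarith) (χ.norm_le_one _)).trans (by linarith)
        _ = _ := by simp [mul_sub]
    rw [hsucc, Finset.sum_range_add, add_sub_right_comm]
    refine (norm_add_le _ _).trans ((add_le_add ih hblock).trans (le_of_eq ?_))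
    push_cast; ring

lemma hasSum_LSeries (d : ℕ) {s : ℝ} (hs : 1 < s) (χ : DirichletCharacter ℂ d) :
    HasSum (fun n : ℕ ↦ χ n * (((n : ℝ) ^ (-s) : ℝ) : ℂ)) (LSeries (fun n ↦ χ n) s) := by
  have hs' : 1 < (s : ℂ).re := by simpa
  have h := (summable_dirichletSummand χ hs').of_norm.hasSum
  rw [tsum_dirichletSummand χ hs'] at h
  simpa only [dirichletSummandHom, MonoidWithZeroHom.coe_mk, ZeroHom.coe_mk,
    natCast_cpow_neg_ofReal] using h

lemma norm_LSeries_sub_le_one (d : ℕ) [NeZero d] {s : ℝ} (hs : 1 < s)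
    {χ : DirichletCharacter ℂ d} (hχ : χ ≠ 1) :
    ‖LSeries (fun n ↦ χ n) s -
      ∑ n ∈ Finset.range d, χ n * (((n : ℝ) ^ (-s) : ℝ) : ℂ)‖ ≤ 1 := by
  have hd : (1 : ℝ) ≤ d := by exact_mod_cast NeZero.one_le
  have hlim := (hasSum_LSeries d hs χ).tendsto_sum_nat.comp
    ((Filter.tendsto_add_atTop_nat 1).const_mul_atTop' (NeZero.pos d))
  refine le_of_tendsto (hlim.sub_const _).norm (Filter.Eventually.of_forall fun J ↦ ?_)
  refine (partial_sum_sub_le d hs hχ J).trans ?_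
  have h1 : (d : ℝ) ^ (-s) ≤ (d : ℝ) ^ (-1 : ℝ) := Real.rpow_le_rpow_of_exponent_le hd (by linarith)
  have h2 : (0 : ℝ) ≤ ((d * (J + 1) : ℕ) : ℝ) ^ (-s) := by positivity
  rw [Real.rpow_neg_one] at h1
  calc _ ≤ (d : ℝ) * (d : ℝ)⁻¹ := by gcongr; linarith
    _ = 1 := mul_inv_cancel₀ (by linarith)

lemma sum_star_char_mul_char (d : ℕ) [NeZero d] (a b : ZMod d) :
    ∑ χ : DirichletCharacter ℂ d, star (χ a) * χ b =
      if IsUnit a ∧ a = b then (d.totient : ℂ) else 0 := by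
  by_cases ha : IsUnit a
  · have h (χ : DirichletCharacter ℂ d) : star (χ a) = χ a⁻¹ := by
      obtain ⟨u, rfl⟩ := ha
      rw [MulChar.star_apply', MulChar.inv_apply, Ring.inverse_unit, ZMod.inv_coe_unit]
    simp_rw [h, DirichletCharacter.sum_char_inv_mul_char_eq ℂ ha, ha, true_and]
  · simp [ha, MulChar.map_nonunit]

/-- Mean square over all characters modulo `d`: only the diagonal survives. -/
lemma sum_norm_sq_partial (d : ℕ) [NeZero d] {s : ℝ} (hs : 1 < s) :
    ∑ χ : DirichletCharacter ℂ d,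
      ‖∑ n ∈ Finset.range d, χ n * (((n : ℝ) ^ (-s) : ℝ) : ℂ)‖ ^ 2 ≤ 2 * d.totient := by
  set c : ZMod d → ℝ := fun z ↦ (z.val : ℝ) ^ (-s) with hc
  have h1 (χ : DirichletCharacter ℂ d) :
      ((‖∑ n ∈ Finset.range d, χ n * (((n : ℝ) ^ (-s) : ℝ) : ℂ)‖ ^ 2 : ℝ) : ℂ) =
      ∑ a : ZMod d, ∑ b : ZMod d, (star (χ a) * χ b) * ((c a : ℂ) * c b) := by
    rw [sum_range_eq_sum_zmod d (fun z n ↦ χ z * (((n : ℝ) ^ (-s) : ℝ) : ℂ))]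
    push_cast
    rw [← Complex.conj_mul', map_sum, Finset.sum_mul_sum]
    refine Finset.sum_congr rfl fun a _ ↦ Finset.sum_congr rfl fun b _ ↦ ?_
    simp only [map_mul, Complex.conj_ofReal, hc]
    simp only [RCLike.star_def]
    ring
  have h2 : ∑ χ : DirichletCharacter ℂ d,
      ‖∑ n ∈ Finset.range d, χ n * (((n : ℝ) ^ (-s) : ℝ) : ℂ)‖ ^ 2 =
      ∑ a : ZMod d, if IsUnit a then (d.totient : ℝ) * (c a * c a) else 0 := by
    apply Complex.ofReal_injective
    rw [Complex.ofReal_sum]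
    simp_rw [h1]
    rw [Finset.sum_comm]
    push_cast
    refine Finset.sum_congr rfl fun a _ ↦ ?_
    rw [Finset.sum_comm]
    simp_rw [← Finset.sum_mul, sum_star_char_mul_char]
    by_cases ha : IsUnit a <;> simp [ha]
  rw [h2]
  calc _ ≤ ∑ a : ZMod d, (d.totient : ℝ) * (c a * c a) := by
        refine Finset.sum_le_sum fun a _ ↦ ?_
        split_ifs
        · exact le_rfl
        · exact mul_nonneg (by positivity) (mul_self_nonneg _)
    _ = d.totient * ∑ n ∈ Finset.range d, ((n : ℝ) ^ (-s) * (n : ℝ) ^ (-s)) := by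
        rw [← Finset.mul_sum, sum_range_eq_sum_zmod d (fun _ n ↦ ((n : ℝ) ^ (-s) * (n : ℝ) ^ (-s)))]
    _ ≤ d.totient * 2 := by
        gcongr
        calc _ ≤ ∑ n ∈ Finset.range d, 1 / (n : ℝ) ^ 2 := by
              refine Finset.sum_le_sum fun n _ ↦ ?_
              rcases Nat.eq_zero_or_pos n with rfl | hn
              · simp [Real.zero_rpow (show -s ≠ 0 by linarith)]
              · have hn' : (1 : ℝ) ≤ n := by exact_mod_cast hn
                have : (n : ℝ) ^ (-s) ≤ (n : ℝ)⁻¹ := by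
                  rw [← Real.rpow_neg_one]
                  exact Real.rpow_le_rpow_of_exponent_le hn' (by linarith)
                calc _ ≤ (n : ℝ)⁻¹ * (n : ℝ)⁻¹ := by gcongr
                  _ = _ := by field_simp
          _ ≤ ∑' n : ℕ, 1 / (n : ℝ) ^ 2 :=
              (Real.summable_one_div_nat_pow.mpr (by norm_num)).sum_le_tsum _
                (fun _ _ ↦ by positivity)
          _ = Real.pi ^ 2 / 6 := hasSum_zeta_two.tsum_eq
          _ ≤ 2 := by nlinarith [Real.pi_lt_d2, Real.pi_pos]
    _ = _ := by ring

/-- Trivial bound by `ζ(s) ≤ 1 + 1 / (s - 1)`. -/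
lemma norm_LSeries_le (d : ℕ) {s : ℝ} (hs : 1 < s) (χ : DirichletCharacter ℂ d) :
    ‖LSeries (fun n ↦ χ n) s‖ ≤ 1 + 1 / (s - 1) := by
  have hsum : Summable fun n : ℕ ↦ (n : ℝ) ^ (-s) := Real.summable_nat_rpow.mpr (by linarith)
  have hz : ∑' n : ℕ, (n : ℝ) ^ (-s) = ∑' n : ℕ, 1 / (n + 1 : ℝ) ^ s := by
    rw [hsum.tsum_eq_zero_add]
    simp only [Nat.cast_zero, Real.zero_rpow (show -s ≠ 0 by linarith), zero_add]
    refine tsum_congr fun n ↦ ?_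
    rw [Real.rpow_neg (by positivity)]; simp
  have h1 := ZetaAsymptotics.zeta_limit_aux1 hs
  have h2 : 0 ≤ ZetaAsymptotics.termTSum s :=
    tsum_nonneg fun n ↦ ZetaAsymptotics.term_nonneg _ _
  have h3 : 0 ≤ s * ZetaAsymptotics.termTSum s := by positivity
  rw [← (hasSum_LSeries d hs χ).tsum_eq]
  refine (tsum_of_norm_bounded hsum.hasSum fun n ↦ ?_).trans (by rw [hz]; linarith)
  rw [norm_mul, Complex.norm_real, Real.norm_of_nonneg (by positivity)]
  exact mul_le_of_le_one_left (by positivity) (χ.norm_le_one _)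

lemma log_le_half_sq {t : ℝ} (ht : 0 ≤ t) : Real.log t ≤ t ^ 2 / 2 := by
  rcases ht.eq_or_lt with rfl | h
  · simp
  · have := Real.log_le_sub_one_of_pos (show 0 < t ^ 2 by positivity)
    rw [Real.log_pow] at this
    push_cast at this
    linarith

/-- Upper bound, uniform in `d`, for a prime sum in the class `1 mod d`; the additive constant does
not decay with `d`. -/
lemma sum_primes_rpow_le (d : ℕ) [NeZero d] {s : ℝ} (hs : 1 < s) (F : Finset ℕ)
    (hF : ∀ q ∈ F, q.Prime ∧ (q : ZMod d) = 1) :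
    ∑ q ∈ F, (q : ℝ) ^ (-s) ≤ Real.log (1 + 1 / (s - 1)) / d.totient + 3 := by
  have hφ : (0 : ℝ) < d.totient := by exact_mod_cast Nat.totient_pos.mpr (NeZero.pos d)
  have hs1 : 0 < 1 / (s - 1) := by have : 0 < s - 1 := by linarith
                                   positivity
  have main := totient_mul_sum_le_sum_log d hs F hF
  set P : DirichletCharacter ℂ d → ℂ :=
    fun χ ↦ ∑ n ∈ Finset.range d, χ n * (((n : ℝ) ^ (-s) : ℝ) : ℂ)
  have hone : Real.log ‖LSeries (fun n ↦ (1 : DirichletCharacter ℂ d) n) s‖ ≤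
      Real.log (1 + 1 / (s - 1)) := by
    rcases (norm_nonneg (LSeries (fun n ↦ (1 : DirichletCharacter ℂ d) n) s)).eq_or_lt with h | h
    · rw [← h, Real.log_zero]; exact Real.log_nonneg (by linarith)
    · exact Real.log_le_log h (norm_LSeries_le d hs 1)
  have hother (χ : DirichletCharacter ℂ d) (hχ : χ ≠ 1) :
      Real.log ‖LSeries (fun n ↦ χ n) s‖ ≤ ‖P χ‖ ^ 2 + 1 := by
    refine (log_le_half_sq (norm_nonneg _)).trans ?_
    have h1 := norm_LSeries_sub_le_one d hs hχ
    have h2 := norm_sub_norm_le (LSeries (fun n ↦ χ n) s) (P χ)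
    have h3 : ‖LSeries (fun n ↦ χ n) s‖ ≤ ‖P χ‖ + 1 := by linarith
    have h4 : ‖LSeries (fun n ↦ χ n) s‖ ^ 2 ≤ (‖P χ‖ + 1) ^ 2 := by gcongr
    nlinarith [sq_nonneg (‖P χ‖ - 1)]
  have hcard : (Fintype.card (DirichletCharacter ℂ d) : ℝ) = d.totient := by
    rw [← Nat.card_eq_fintype_card, DirichletCharacter.card_eq_totient_of_hasEnoughRootsOfUnity]
  have htot : (d.totient : ℝ) * ∑ q ∈ F, (q : ℝ) ^ (-s) ≤
      Real.log (1 + 1 / (s - 1)) + 3 * d.totient := by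
    refine main.trans ?_
    rw [← Finset.add_sum_erase _ _ (Finset.mem_univ (1 : DirichletCharacter ℂ d))]
    refine add_le_add hone ?_
    calc _ ≤ ∑ χ ∈ Finset.univ.erase (1 : DirichletCharacter ℂ d), (‖P χ‖ ^ 2 + 1) :=
          Finset.sum_le_sum fun χ hχ ↦ hother χ (Finset.ne_of_mem_erase hχ)
      _ ≤ ∑ χ : DirichletCharacter ℂ d, (‖P χ‖ ^ 2 + 1) :=
          Finset.sum_le_sum_of_subset_of_nonneg (Finset.erase_subset _ _)
            (fun _ _ _ ↦ by positivity)
      _ ≤ 2 * d.totient + d.totient := by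
          rw [Finset.sum_add_distrib]
          refine add_le_add (sum_norm_sq_partial d hs) ?_
          simp [hcard]
      _ = _ := by ring
  rw [div_add' _ _ _ hφ.ne', le_div_iff₀ hφ]
  linarith

/-! ### Reciprocal sums of primes `q ≡ 1 mod d` up to `N` -/

/-- The primes `q ≤ N` with `q ≡ 1 mod d`, the congruence being written as `d ∣ q - 1`; the
truncated subtraction is harmless because `q ≥ 1`. -/
def primesOne (d N : ℕ) : Finset ℕ := {q ∈ Finset.Icc 1 N | q.Prime ∧ d ∣ q - 1}

lemma sum_inv_primesOne_le {d N : ℕ} (hd : d ≠ 0) (hN : 3 ≤ N) :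
    ∑ q ∈ primesOne d N, (q : ℝ)⁻¹ ≤
      Real.exp 1 * (Real.log (1 + Real.log N) / d.totient + 3) := by
  have : NeZero d := ⟨hd⟩
  have hNpos : (0 : ℝ) < N := by positivity
  have hL : 0 < Real.log N := Real.log_pos (by exact_mod_cast (by omega : 1 < N))
  have key := sum_primes_rpow_le d (s := 1 + 1 / Real.log N) (by simpa using hL) (primesOne d N) (by
    intro q hq
    simp only [primesOne, Finset.mem_filter, Finset.mem_Icc] at hq
    refine ⟨hq.2.1, ?_⟩
    have h0 := (ZMod.natCast_eq_zero_iff (q - 1) d).mpr hq.2.2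
    rwa [Nat.cast_sub hq.1.1, Nat.cast_one, sub_eq_zero] at h0)
  rw [add_sub_cancel_left, one_div_one_div] at key
  refine le_trans ?_ (mul_le_mul_of_nonneg_left key (Real.exp_pos 1).le)
  rw [Finset.mul_sum]
  refine Finset.sum_le_sum fun q hq ↦ ?_
  simp only [primesOne, Finset.mem_filter, Finset.mem_Icc] at hq
  have hq0 : (0 : ℝ) < q := by exact_mod_cast hq.1.1
  -- Since `q ≤ N`, passing from `1 / q` to `q ^ (-s)` costs a factor of at most `e`.
  have h1 : (q : ℝ) ^ (1 / Real.log N) ≤ Real.exp 1 := by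
    calc (q : ℝ) ^ (1 / Real.log N) ≤ (N : ℝ) ^ (1 / Real.log N) := by
          gcongr; exact hq.1.2
      _ = Real.exp 1 := by rw [Real.rpow_def_of_pos hNpos, mul_one_div_cancel hL.ne']
  rw [neg_add, Real.rpow_add hq0, Real.rpow_neg_one, Real.rpow_neg hq0.le]
  have h2 : 0 < (q : ℝ) ^ (1 / Real.log N) := by positivity
  calc (q : ℝ)⁻¹ = (q : ℝ) ^ (1 / Real.log N) * ((q : ℝ)⁻¹ * ((q : ℝ) ^ (1 / Real.log N))⁻¹) := by
        field_simp
    _ ≤ _ := by gcongr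

/-- Every `q` in the sum is `1 + d j` with `1 ≤ j ≤ N`, so primality is not needed. -/
lemma sum_inv_primesOne_le_trivial {d N : ℕ} (hd : d ≠ 0) :
    ∑ q ∈ primesOne d N, (q : ℝ)⁻¹ ≤ (1 + Real.log N) / d := by
  have hd0 : (0 : ℝ) < d := by positivity
  have hharm : ∑ j ∈ Finset.Icc 1 N, (j : ℝ)⁻¹ ≤ 1 + Real.log N := by
    have := harmonic_le_one_add_log N
    rw [harmonic_eq_sum_Icc] at this
    push_cast at this
    exact this
  have hmem : ∀ q ∈ primesOne d N, (q - 1) / d ∈ Finset.Icc 1 N ∧ q = d * ((q - 1) / d) + 1 := by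
    intro q hq
    simp only [primesOne, Finset.mem_filter, Finset.mem_Icc] at hq
    obtain ⟨⟨h1, h2⟩, hp, hdvd⟩ := hq
    have h3 := hp.two_le
    have h4 := Nat.mul_div_cancel' hdvd
    refine ⟨Finset.mem_Icc.mpr ⟨?_, (Nat.div_le_self _ _).trans (by omega)⟩, by omega⟩
    exact Nat.div_pos (Nat.le_of_dvd (by omega) hdvd) (Nat.pos_of_ne_zero hd)
  have hinj : Set.InjOn (fun q ↦ (q - 1) / d) (primesOne d N : Set ℕ) := by
    intro a ha b hb hab
    rw [(hmem a ha).2, (hmem b hb).2]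
    simp only at hab
    rw [hab]
  calc ∑ q ∈ primesOne d N, (q : ℝ)⁻¹
      ≤ ∑ q ∈ primesOne d N, (((q - 1) / d : ℕ) : ℝ)⁻¹ * (d : ℝ)⁻¹ := by
        refine Finset.sum_le_sum fun q hq ↦ ?_
        obtain ⟨h1, h2⟩ := hmem q hq
        have h3 : (0 : ℝ) < ((q - 1) / d : ℕ) := by
          exact_mod_cast (Finset.mem_Icc.mp h1).1
        rw [← mul_inv]
        gcongr
        have : (((q - 1) / d : ℕ) * d : ℕ) ≤ q := by
          rw [mul_comm]; omega
        exact_mod_cast this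
    _ = ∑ j ∈ (primesOne d N).image (fun q ↦ (q - 1) / d), (j : ℝ)⁻¹ * (d : ℝ)⁻¹ := by
        rw [Finset.sum_image hinj]
    _ ≤ ∑ j ∈ Finset.Icc 1 N, (j : ℝ)⁻¹ * (d : ℝ)⁻¹ := by
        refine Finset.sum_le_sum_of_subset_of_nonneg ?_ (fun _ _ _ ↦ by positivity)
        intro j hj
        obtain ⟨q, hq, rfl⟩ := Finset.mem_image.mp hj
        exact (hmem q hq).1
    _ ≤ _ := by
        rw [← Finset.sum_mul, div_eq_mul_inv]
        gcongr

lemma one_le_log_log {N : ℕ} (hN : 16 ≤ N) : 1 ≤ Real.log (Real.log N) := by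
  have h1 : Real.exp 1 ≤ Real.log N := by
    have h2 : Real.log 16 ≤ Real.log N := Real.log_le_log (by norm_num) (by exact_mod_cast hN)
    have h3 : Real.log 16 = 4 * Real.log 2 := by
      rw [show (16 : ℝ) = 2 ^ 4 by norm_num, Real.log_pow]; norm_num
    linarith [Real.log_two_gt_d9, Real.exp_one_lt_d9]
  rwa [Real.le_log_iff_exp_le ((Real.exp_pos 1).trans_le h1)]

/-- The moduli `p ^ k` with `k ≤ K ≍ log log N` are handled by `sum_inv_primesOne_le`, the larger
ones by `sum_inv_primesOne_le_trivial`. -/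
lemma sum_primesOne_pow_le {p N : ℕ} (hp : p.Prime) (hN : 16 ≤ N) :
    ∑ k ∈ Finset.Icc 1 N, ∑ q ∈ primesOne (p ^ k) N, (q : ℝ)⁻¹ ≤
      41 * Real.log (Real.log N) := by
  set L := Real.log N with hL
  set y := Real.log L with hy
  have hy1 : 1 ≤ y := one_le_log_log hN
  have hLpos : 0 < L := by
    rw [hL]; exact Real.log_pos (by exact_mod_cast (by omega : 1 < N))
  have hL1 : 1 ≤ L := by
    by_contra! h
    have := Real.log_nonpos hLpos.le h.le
    linarith
  have hp2 : (2 : ℝ) ≤ p := by exact_mod_cast hp.two_le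
  -- `K` is chosen so that `2 ^ K ≥ log N`, using `2 log 2 ≥ 1`, while still `K = O(log log N)`.
  set K := ⌈2 * y⌉₊ with hK
  have hK1 : (K : ℝ) ≤ 3 * y := by
    have := Nat.ceil_lt_add_one (show 0 ≤ 2 * y by linarith)
    linarith
  have hK2 : L ≤ 2 ^ K := by
    have h1 : 2 * y ≤ K := Nat.le_ceil _
    rw [← Real.exp_log hLpos, ← hy, ← Real.exp_log (show (0 : ℝ) < 2 ^ K by positivity),
      Real.log_pow]
    apply Real.exp_le_exp.mpr
    nlinarith [Real.log_two_gt_d9]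
  have hlog : Real.log (1 + L) ≤ 2 * y := by
    have h1 : Real.log (1 + L) ≤ Real.log (2 * L) := Real.log_le_log (by linarith) (by linarith)
    rw [Real.log_mul (by norm_num) hLpos.ne'] at h1
    linarith [Real.log_two_lt_d9]
  set A : ℕ → ℝ := fun k ↦ ∑ q ∈ primesOne (p ^ k) N, (q : ℝ)⁻¹ with hA
  have hA0 (k) : 0 ≤ A k := Finset.sum_nonneg fun _ _ ↦ by positivity
  have hpow (k : ℕ) : p ^ k ≠ 0 := pow_ne_zero _ hp.ne_zero
  have small (k : ℕ) : A (k + 1) ≤ Real.exp 1 * (2 * y * (1 / 2) ^ k + 3) := by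
    refine (sum_inv_primesOne_le (hpow (k + 1)) (by omega)).trans ?_
    gcongr
    have ht : (2 : ℝ) ^ k ≤ (p ^ (k + 1)).totient := by
      rw [Nat.totient_prime_pow_succ hp]
      have : 2 ^ k * 1 ≤ p ^ k * (p - 1) :=
        Nat.mul_le_mul (Nat.pow_le_pow_left hp.two_le k) (by have := hp.two_le; omega)
      rw [mul_one] at this
      exact_mod_cast this
    rw [one_div, inv_pow, ← div_eq_mul_inv]
    gcongr
  have large (k : ℕ) : A (k + 1) ≤ (1 + L) / 2 * (1 / 2) ^ k := by
    refine (sum_inv_primesOne_le_trivial (hpow (k + 1))).trans ?_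
    push_cast
    calc (1 + L) / (p : ℝ) ^ (k + 1) ≤ (1 + L) / 2 ^ (k + 1) := by gcongr
      _ = _ := by rw [one_div, inv_pow, pow_succ]; field_simp
  have geom (n : ℕ) : ∑ k ∈ Finset.range n, ((1 : ℝ) / 2) ^ k ≤ 2 := by
    rw [geom_sum_eq (by norm_num), show (1 : ℝ) / 2 - 1 = -(1 / 2) by norm_num]
    have : (0 : ℝ) ≤ (1 / 2) ^ n := by positivity
    rw [div_neg, ← neg_div, div_le_iff₀ (by norm_num)]
    linarith
  calc ∑ k ∈ Finset.Icc 1 N, A k = ∑ k ∈ Finset.range N, A (k + 1) := by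
        rw [Finset.range_eq_Ico, Finset.sum_Ico_add' A 0 N 1]; rfl
    _ ≤ ∑ k ∈ Finset.range (K + N), A (k + 1) :=
        Finset.sum_le_sum_of_subset_of_nonneg (Finset.range_subset_range.mpr (by omega))
          (fun _ _ _ ↦ hA0 _)
    _ = ∑ k ∈ Finset.range K, A (k + 1) + ∑ k ∈ Finset.range N, A (K + k + 1) :=
        Finset.sum_range_add _ _ _
    _ ≤ ∑ k ∈ Finset.range K, Real.exp 1 * (2 * y * (1 / 2) ^ k + 3) +
        ∑ k ∈ Finset.range N, (1 + L) / 2 * (1 / 2) ^ (K + k) :=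
        add_le_add (Finset.sum_le_sum fun k _ ↦ small k) (Finset.sum_le_sum fun k _ ↦ large _)
    _ = Real.exp 1 * (2 * y * ∑ k ∈ Finset.range K, ((1 : ℝ) / 2) ^ k + 3 * K) +
        (1 + L) / 2 / 2 ^ K * ∑ k ∈ Finset.range N, ((1 : ℝ) / 2) ^ k := by
        rw [← Finset.mul_sum, Finset.sum_add_distrib, ← Finset.mul_sum]
        congr 1
        · simp [mul_comm]
        · simp_rw [pow_add, ← mul_assoc]
          rw [← Finset.mul_sum, one_div, inv_pow, ← div_eq_mul_inv]
    _ ≤ Real.exp 1 * (2 * y * 2 + 3 * (3 * y)) + (1 + L) / 2 / L * 2 := by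
        gcongr
        · exact geom _
        · exact geom _
    _ ≤ 41 * y := by
        have h1 : (1 + L) / 2 / L * 2 ≤ 2 := by
          rw [div_div, div_mul_eq_mul_div, div_le_iff₀ (by positivity)]; linarith
        nlinarith [Real.exp_one_lt_d9]

/-! ### Mean value of `f_ℓ` -/

/-- Read off from `φ(n) ∏_{q ∣ n} q = n ∏_{q ∣ n} (q - 1)`. -/
lemma factorization_totient_le {p n : ℕ} (hn : n ≠ 0) :
    (Nat.totient n).factorization p ≤
      n.factorization p + ∑ q ∈ n.primeFactors, (q - 1).factorization p := by
  have h := congrArg (fun m ↦ m.factorization p) (Nat.totient_mul_prod_primeFactors n)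
  have h1 : ∏ q ∈ n.primeFactors, q ≠ 0 :=
    Finset.prod_ne_zero_iff.mpr fun q hq ↦ (Nat.prime_of_mem_primeFactors hq).ne_zero
  have h2 : ∀ q ∈ n.primeFactors, q - 1 ≠ 0 := fun q hq ↦ by
    have := (Nat.prime_of_mem_primeFactors hq).two_le; omega
  have h3 := Finset.prod_ne_zero_iff.mpr h2
  have h4 : n.totient ≠ 0 := (Nat.totient_pos.mpr (Nat.pos_of_ne_zero hn)).ne'
  simp only [Nat.factorization_mul h4 h1, Nat.factorization_mul hn h3,
    Nat.factorization_prod h2, Finsupp.add_apply, Finsupp.finsetSum_apply] at h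
  omega

/-- The left-hand side is `v_p(N!)`, bounded by Legendre's formula. -/
lemma sum_factorization_le {p : ℕ} (hp : p.Prime) (N : ℕ) :
    ∑ n ∈ Finset.Icc 1 N, n.factorization p ≤ N := by
  rcases Nat.eq_zero_or_pos N with rfl | hN
  · simp
  have : Fact p.Prime := ⟨hp⟩
  have h1 : ∑ n ∈ Finset.Icc 1 N, n.factorization p = (N.factorial).factorization p := by
    clear hN
    induction N with
    | zero => simp
    | succ N ih =>
      rw [Finset.sum_Icc_succ_top (by omega), ih, Nat.factorial_succ,
        Nat.factorization_mul (by omega) (Nat.factorial_ne_zero N), Finsupp.add_apply, add_comm]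
  have h2 := sub_one_mul_padicValNat_factorial_lt_of_ne_zero p hN.ne'
  rw [h1, Nat.factorization_def _ hp]
  have h3 : 1 * padicValNat p N.factorial ≤ (p - 1) * padicValNat p N.factorial :=
    Nat.mul_le_mul_right _ (by have := hp.two_le; omega)
  omega

lemma factorization_le_card {p m N : ℕ} (hp : p.Prime) (hm : m ≤ N) :
    m.factorization p ≤ ({k ∈ Finset.Icc 1 N | p ^ k ∣ m} : Finset ℕ).card := by
  rw [Nat.factorization_eq_card_pow_dvd m hp]
  refine Finset.card_le_card fun k hk ↦ ?_
  simp only [Finset.mem_filter, Finset.mem_Ico, Finset.mem_Icc] at hk ⊢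
  exact ⟨⟨hk.1.1, by omega⟩, hk.2⟩

lemma sum_factorization_sub_one_le {p N : ℕ} (hp : p.Prime) (hN : 16 ≤ N) :
    ∑ q ∈ Finset.Icc 1 N with q.Prime, ((q - 1).factorization p : ℝ) * (q : ℝ)⁻¹ ≤
      41 * Real.log (Real.log N) := by
  refine le_trans ?_ (sum_primesOne_pow_le hp hN)
  calc _ ≤ ∑ q ∈ Finset.Icc 1 N with q.Prime,
        ∑ k ∈ Finset.Icc 1 N, if p ^ k ∣ q - 1 then (q : ℝ)⁻¹ else 0 := by
        refine Finset.sum_le_sum fun q hq ↦ ?_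
        have hqN := (Finset.mem_Icc.mp (Finset.mem_filter.mp hq).1).2
        rw [← Finset.sum_filter, Finset.sum_const, nsmul_eq_mul]
        gcongr
        exact factorization_le_card hp (by omega)
    _ = _ := by
        rw [Finset.sum_comm]
        refine Finset.sum_congr rfl fun k _ ↦ ?_
        rw [← Finset.sum_filter, Finset.filter_filter]
        rfl

lemma sum_factorization_totient_le {p N : ℕ} (hp : p.Prime) (hN : 16 ≤ N) :
    ∑ n ∈ Finset.Icc 1 N, ((Nat.totient n).factorization p : ℝ) ≤
      42 * N * Real.log (Real.log N) := by
  have hy := one_le_log_log hN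
  have hswap : ∑ n ∈ Finset.Icc 1 N, ∑ q ∈ n.primeFactors, ((q - 1).factorization p : ℝ) ≤
      N * ∑ q ∈ Finset.Icc 1 N with q.Prime, ((q - 1).factorization p : ℝ) * (q : ℝ)⁻¹ := by
    calc _ = ∑ n ∈ Finset.Icc 1 N, ∑ q ∈ Finset.Icc 1 N with q.Prime,
          if q ∣ n then ((q - 1).factorization p : ℝ) else 0 := by
          refine Finset.sum_congr rfl fun n hn ↦ ?_
          have hn := Finset.mem_Icc.mp hn
          rw [← Finset.sum_filter]
          refine Finset.sum_congr ?_ fun _ _ ↦ rfl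
          ext q
          simp only [Nat.mem_primeFactors, Finset.mem_filter, Finset.mem_Icc]
          constructor
          · rintro ⟨h1, h2, h3⟩
            exact ⟨⟨⟨h1.one_le, (Nat.le_of_dvd (by omega) h2).trans hn.2⟩, h1⟩, h2⟩
          · rintro ⟨⟨_, h1⟩, h2⟩
            exact ⟨h1, h2, by omega⟩
      _ = ∑ q ∈ Finset.Icc 1 N with q.Prime, ((N / q : ℕ) : ℝ) * (q - 1).factorization p := by
          rw [Finset.sum_comm]
          refine Finset.sum_congr rfl fun q _ ↦ ?_
          rw [← Finset.sum_filter, Finset.sum_const, nsmul_eq_mul,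
            ← Nat.Ioc_filter_dvd_card_eq_div]
          rfl
      _ ≤ _ := by
          rw [Finset.mul_sum]
          refine Finset.sum_le_sum fun q _ ↦ ?_
          have : ((N / q : ℕ) : ℝ) ≤ N * (q : ℝ)⁻¹ := by
            rw [← div_eq_mul_inv]; exact Nat.cast_div_le
          calc _ ≤ N * (q : ℝ)⁻¹ * (q - 1).factorization p := by gcongr
            _ = _ := by ring
  have hN' : ∑ n ∈ Finset.Icc 1 N, (n.factorization p : ℝ) ≤ N := by
    exact_mod_cast sum_factorization_le hp N
  calc _ ≤ ∑ n ∈ Finset.Icc 1 N, ((n.factorization p : ℝ) +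
        ∑ q ∈ n.primeFactors, ((q - 1).factorization p : ℝ)) := by
        refine Finset.sum_le_sum fun n hn ↦ ?_
        have h0 : n ≠ 0 := by have := (Finset.mem_Icc.mp hn).1; omega
        exact_mod_cast factorization_totient_le (p := p) h0
    _ ≤ N + N * (41 * Real.log (Real.log N)) := by
        rw [Finset.sum_add_distrib]
        refine add_le_add hN' (hswap.trans ?_)
        gcongr
        exact sum_factorization_sub_one_le hp hN
    _ ≤ _ := by
        have : (0 : ℝ) ≤ N := by positivity
        nlinarith

lemma sum_fAux_le (ℓ : ℕ) {N : ℕ} (hN : 16 ≤ N) :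
    ∑ n ∈ Finset.Icc 1 N, fAux ℓ n ≤
      42 * N * Real.log (Real.log N) * ∑ p ∈ ℓ.primeFactors, Real.log p := by
  unfold fAux
  rw [Finset.sum_comm, Finset.mul_sum]
  refine Finset.sum_le_sum fun p hp ↦ ?_
  rw [← Finset.sum_mul]
  exact mul_le_mul_of_nonneg_right
    (sum_factorization_totient_le (Nat.prime_of_mem_primeFactors hp) hN) (Real.log_natCast_nonneg p)

lemma fAux_nonneg (ℓ n : ℕ) : 0 ≤ fAux ℓ n :=
  Finset.sum_nonneg fun p _ ↦ mul_nonneg (by positivity) (Real.log_natCast_nonneg p)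

/-! ### Markov's inequality -/

lemma half_log_log_le {x t : ℝ} (hx : 1 < x) (hy : 2 ≤ Real.log (Real.log x))
    (ht : Real.sqrt x < t) : Real.log (Real.log x) / 2 ≤ Real.log (Real.log t) := by
  have hlx : 0 < Real.log x := Real.log_pos hx
  have h1 : Real.log x / 2 ≤ Real.log t := by
    rw [← Real.log_sqrt (by linarith)]
    exact Real.log_le_log (Real.sqrt_pos.mpr (by linarith)) ht.le
  have h2 := Real.log_le_log (by linarith) h1
  rw [Real.log_div hlx.ne' (by norm_num)] at h2
  linarith [Real.log_two_lt_d9]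

lemma sqrt_le_div_log_log {x : ℝ} (hx : 1 < x) (hy : 2 ≤ Real.log (Real.log x)) :
    Real.sqrt x ≤ x / Real.log (Real.log x) := by
  have hlx : 0 < Real.log x := Real.log_pos hx
  have h1 : Real.log (Real.log x) ≤ Real.sqrt x := by
    have h2 := Real.log_le_sub_one_of_pos (show 0 < Real.log x / 2 by linarith)
    rw [Real.log_div hlx.ne' (by norm_num)] at h2
    have h3 := Real.log_le_sub_one_of_pos (Real.sqrt_pos.mpr (show 0 < x by linarith))
    rw [Real.log_sqrt (by linarith)] at h3
    linarith [Real.log_two_lt_d9]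
  rw [le_div_iff₀ (by linarith)]
  calc _ ≤ Real.sqrt x * Real.sqrt x := by gcongr
    _ = x := Real.mul_self_sqrt (by linarith)

/-- For fixed `ℓ ≥ 2`, the number of integers `16 ≤ n ≤ x` with
`f_ℓ(n) > (log log n)²` is `O_ℓ(x / log log x)`; in particular
`f_ℓ(n) ≤ (log log n)²` for almost all `n`. -/
theorem fAux_small_almost_always (ℓ : ℕ) (hℓ : 2 ≤ ℓ) :
    ∃ C : ℝ, 0 < C ∧ ∀ x : ℝ, Real.exp (Real.exp (Real.exp 1)) < x →
      (Set.ncard {n : ℕ | 16 ≤ n ∧ (n : ℝ) ≤ x ∧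
        fAux ℓ n > (Real.log (Real.log n))^2} : ℝ) ≤
      C * x / Real.log (Real.log x) := by
  set B : ℝ := ∑ p ∈ ℓ.primeFactors, Real.log p with hB
  have hB0 : 0 ≤ B := Finset.sum_nonneg fun p _ ↦ Real.log_natCast_nonneg p
  refine ⟨168 * B + 1, by positivity, fun x hx ↦ ?_⟩
  have he : 2 ≤ Real.exp 1 := by linarith [Real.add_one_le_exp 1]
  have hee : 5 ≤ Real.exp (Real.exp 1) := by
    nlinarith [Real.quadratic_le_exp_of_nonneg (Real.exp_pos 1).le]
  have heee : 18 ≤ Real.exp (Real.exp (Real.exp 1)) := by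
    nlinarith [Real.quadratic_le_exp_of_nonneg (Real.exp_pos (Real.exp 1)).le]
  have hx18 : 18 ≤ x := by linarith
  have hlx : Real.exp (Real.exp 1) < Real.log x := by
    rwa [Real.lt_log_iff_exp_lt (by linarith)]
  set y := Real.log (Real.log x) with hy
  have hy2 : 2 ≤ y := by
    have : Real.exp 1 < y := by rwa [hy, Real.lt_log_iff_exp_lt (by linarith)]
    linarith
  set N := ⌊x⌋₊ with hN
  have hN16 : 16 ≤ N := Nat.le_floor (by push_cast; linarith)
  have hNx : (N : ℝ) ≤ x := Nat.floor_le (by linarith)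
  have hNy : Real.log (Real.log N) ≤ y := by
    have h1 : Real.log N ≤ Real.log x := Real.log_le_log (by positivity) hNx
    refine Real.log_le_log (Real.log_pos ?_) h1
    exact_mod_cast (by omega : 1 < N)
  -- `S₁` absorbs the bad `n ≤ √x`, and `S₂` is the set to which Markov's inequality applies.
  set S₁ : Finset ℕ := Finset.Icc 1 ⌊Real.sqrt x⌋₊
  set S₂ : Finset ℕ := {n ∈ Finset.Icc 1 N | y ^ 2 / 4 ≤ fAux ℓ n}
  have hsub : {n : ℕ | 16 ≤ n ∧ (n : ℝ) ≤ x ∧ fAux ℓ n > (Real.log (Real.log n))^2} ⊆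
      ((S₁ ∪ S₂ : Finset ℕ) : Set ℕ) := by
    rintro n ⟨h1, h2, h3⟩
    simp only [Finset.coe_union, Set.mem_union, Finset.mem_coe, S₁, S₂, Finset.mem_Icc,
      Finset.mem_filter]
    rcases le_or_gt (n : ℝ) (Real.sqrt x) with h | h
    · exact Or.inl ⟨by omega, Nat.le_floor h⟩
    · refine Or.inr ⟨⟨by omega, Nat.le_floor h2⟩, ?_⟩
      have h4 := half_log_log_le (by linarith) hy2 h
      rw [← hy] at h4
      nlinarith
  have hcard₁ : (S₁.card : ℝ) ≤ x / y := by
    refine le_trans ?_ (sqrt_le_div_log_log (by linarith) hy2)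
    simp only [S₁, Nat.card_Icc, Nat.add_sub_cancel]
    exact Nat.floor_le (Real.sqrt_nonneg x)
  have hcard₂ : (S₂.card : ℝ) ≤ 168 * B * x / y := by
    have h1 : (S₂.card : ℝ) * (y ^ 2 / 4) ≤ 42 * x * y * B := by
      calc (S₂.card : ℝ) * (y ^ 2 / 4) ≤ ∑ n ∈ S₂, fAux ℓ n := by
            rw [← nsmul_eq_mul]
            exact Finset.card_nsmul_le_sum _ _ _ fun n hn ↦ (Finset.mem_filter.mp hn).2
        _ ≤ ∑ n ∈ Finset.Icc 1 N, fAux ℓ n :=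
            Finset.sum_le_sum_of_subset_of_nonneg (Finset.filter_subset _ _)
              (fun n _ _ ↦ fAux_nonneg ℓ n)
        _ ≤ 42 * N * Real.log (Real.log N) * B := sum_fAux_le ℓ hN16
        _ ≤ 42 * x * y * B := by
            have := one_le_log_log hN16
            gcongr
    rw [le_div_iff₀ (by linarith)]
    have h2 : y * (S₂.card * y) ≤ y * (168 * B * x) := by linarith
    exact le_of_mul_le_mul_left h2 (by linarith)
  calc _ ≤ ((S₁ ∪ S₂).card : ℝ) := by
        rw [← Set.ncard_coe_finset]
        exact_mod_cast Set.ncard_le_ncard hsub (Finset.finite_toSet _)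
    _ ≤ S₁.card + S₂.card := by exact_mod_cast Finset.card_union_le _ _
    _ ≤ x / y + 168 * B * x / y := add_le_add hcard₁ hcard₂
    _ = _ := by ring
end

section
/- For any integers ℓ ≥ 2 and n ≥ 2, the number of cycles of the ℓ-th power map modulo n satisfies C(ℓ, n) ≤ n·τ(λ(n))·τ(n)/ord*(ℓ, λ(n)), where τ(m) denotes the number of positive divisors of m. -/
/-!
A periodic point `u` of `x ↦ x ^ ℓ` on `ℤ/nℤ` satisfies `u ^ (N + 1) = u` with `N + 1 = ℓ ^ k`,
`k ≥ 1`. Then `e = u ^ N` is idempotent, and `w = u + (1 - e)` satisfies `w ^ N = 1`, so that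
`u = e * w` with `w` a unit whose order `f` is coprime to `ℓ` (`exists_idempotent_unit`). The map
acts on `u` through `w`, fixing `e`. Choose one such `(u, e, w)` for every cycle and sort the cycles
by the pair `(e, f)`. An idempotent is determined by its gcd with `n`
(`idempotent_eq_of_gcd_eq`), so there are at most `τ(n) τ(λ(n))` classes.

Fix a class, and let `t` be the order of `ℓ` modulo `f`, `T = ord*(ℓ, λ(n))` and `L` the largest
divisor of `λ(n)` coprime to `ℓ`. Sending a cycle and an exponent `i < t` to `w ^ (ℓ ^ i)` is
injective into the `f`-torsion of `(ℤ/nℤ)ˣ`. That torsion has at most `n / (L / f)` elements, because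
the group of `f`-th powers contains an element of order `λ(n) / f` (`card_torsion_mul_le`). Moreover
`T ≤ t (L / f)`, since the powers of `ℓ ^ t` modulo `L` lie among the `L / f` residues that are `1`
modulo `f` (`orderOf_natCast_le`). Hence a class contains at most `n / T` cycles.
-/

/-- Carmichael's function: the exponent of the multiplicative group `(ℤ/nℤ)ˣ`. -/
noncomputable def lam (n : ℕ) : ℕ := Monoid.exponent (ZMod n)ˣ

/-- `coprimePart m u` is `m_{(u)}`, the largest divisor of `m` coprime to `u`. -/
def coprimePart (m u : ℕ) : ℕ :=
  (m.divisors.filter (fun d => Nat.Coprime d u)).sup id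

/-- `ordStar u m = ord*(u, m)` is the multiplicative order of `u` modulo `m_{(u)}`,
the largest divisor of `m` coprime to `u`. -/
noncomputable def ordStar (u m : ℕ) : ℕ :=
  orderOf (u : ZMod (coprimePart m u))

/-- The set of cycles of the map `x ↦ x^ℓ` on `ℤ/nℤ`: the orbits, under iteration of
this map, of its periodic points. -/
def cycleSet (ℓ n : ℕ) : Set (Set (ZMod n)) :=
  {S | ∃ u ∈ Function.periodicPts (fun x : ZMod n => x ^ ℓ),
    S = {v | ∃ k : ℕ, (fun x : ZMod n => x ^ ℓ)^[k] u = v}}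

/-- `numCycles ℓ n` is the number of cycles of the `ℓ`-th power map modulo `n`. -/
noncomputable def numCycles (ℓ n : ℕ) : ℕ := (cycleSet ℓ n).ncard

/-- The idempotent is `u ^ N`, and the unit agrees with `u` on the component it cuts out and with
`1` on the complementary one. -/
lemma exists_idempotent_unit {R : Type*} [CommRing R] {u : R} {N : ℕ} (hN : 0 < N)
    (hu : u ^ (N + 1) = u) :
    ∃ (e : R) (w : Rˣ), e * e = e ∧ u = e * w ∧ w ^ N = 1 := by
  have heu : u ^ N * u = u := by rw [← pow_succ, hu]
  have hee : u ^ N * u ^ N = u ^ N := by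
    obtain ⟨M, rfl⟩ := Nat.exists_eq_succ_of_ne_zero hN.ne'
    calc u ^ (M + 1) * u ^ (M + 1) = (u ^ (M + 1) * u) * u ^ M := by ring
      _ = u ^ (M + 1) := by rw [heu]; ring
  set e := u ^ N with he
  have hpow : ∀ m : ℕ, (u + (1 - e)) ^ (m + 1) = u ^ (m + 1) + (1 - e) := by
    intro m
    induction m with
    | zero => ring
    | succ m ih =>
      rw [pow_succ, ih]
      linear_combination (-u ^ m - 1) * heu + hee
  have hw : (u + (1 - e)) ^ N = 1 := by
    obtain ⟨M, rfl⟩ := Nat.exists_eq_succ_of_ne_zero hN.ne'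
    rw [Nat.succ_eq_add_one, hpow M, ← Nat.succ_eq_add_one, ← he]
    ring
  refine ⟨e, Units.ofPowEqOne _ N hw hN.ne', hee, ?_, Units.pow_ofPowEqOne hw hN.ne'⟩
  rw [Units.val_ofPowEqOne]
  linear_combination -heu + hee

/-- By Bézout, `a` and `gcd(a, n)` generate the same ideal of `ℤ/nℤ`, and an idempotent is determined
by the ideal it generates. -/
lemma idempotent_eq_of_gcd_eq {n : ℕ} [NeZero n] {e e' : ZMod n} (he : e * e = e)
    (he' : e' * e' = e') (h : Nat.gcd e.val n = Nat.gcd e'.val n) : e = e' := by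
  have key : ∀ a b : ZMod n, Nat.gcd a.val n = Nat.gcd b.val n → a ∣ b := by
    intro a b hab
    have h1 : a ∣ ((Nat.gcd a.val n : ℕ) : ZMod n) := by
      have := congrArg (Int.cast : ℤ → ZMod n) (Nat.gcd_eq_gcd_ab a.val n)
      push_cast at this
      rw [this, ZMod.natCast_zmod_val, ZMod.natCast_self, zero_mul, add_zero]
      exact Dvd.intro _ rfl
    have h2 : ((Nat.gcd b.val n : ℕ) : ZMod n) ∣ b := by
      conv_rhs => rw [← ZMod.natCast_zmod_val b]
      exact Nat.cast_dvd_cast (Nat.gcd_dvd_left _ _)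
    exact h1.trans (hab ▸ h2)
  obtain ⟨c, hc⟩ := key e e' h
  obtain ⟨d, hd⟩ := key e' e h.symm
  -- Idempotents dividing each other both equal their product.
  have h1 : e * e' = e' := by rw [hc, ← mul_assoc, he]
  have h2 : e' * e = e := by
    rw [hd, ← mul_assoc, he']
  rw [← h2, mul_comm, h1]

lemma coprimePart_coprime {m : ℕ} (hm : m ≠ 0) (u : ℕ) :
    coprimePart m u ∣ m ∧ Nat.Coprime (coprimePart m u) u := by
  have hne : (m.divisors.filter (fun d => Nat.Coprime d u)).Nonempty :=
    ⟨1, by simp [hm]⟩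
  obtain ⟨d, hd, h⟩ := Finset.exists_mem_eq_sup _ hne id
  rw [coprimePart, h]
  simp only [Finset.mem_filter, Nat.mem_divisors] at hd
  exact ⟨hd.1.1, hd.2⟩

/-- The largest divisor of `m` coprime to `u` is also largest for divisibility. -/
lemma dvd_coprimePart {m u f : ℕ} (hm : m ≠ 0) (hf : f ∣ m) (hfu : Nat.Coprime f u) :
    f ∣ coprimePart m u := by
  obtain ⟨h1, h2⟩ := coprimePart_coprime hm u
  have hdvd : Nat.lcm f (coprimePart m u) ∣ m := Nat.lcm_dvd hf h1
  have hco : Nat.Coprime (Nat.lcm f (coprimePart m u)) u :=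
    Nat.Coprime.coprime_dvd_left (Nat.lcm_dvd_mul _ _) (Nat.Coprime.mul_left hfu h2)
  have hle : Nat.lcm f (coprimePart m u) ≤ coprimePart m u :=
    Finset.le_sup (f := id) (s := m.divisors.filter (fun d => Nat.Coprime d u))
      (Finset.mem_filter.2 ⟨Nat.mem_divisors.2 ⟨hdvd, hm⟩, hco⟩)
  have hpos : 0 < coprimePart m u := Nat.pos_of_dvd_of_pos h1 (Nat.pos_of_ne_zero hm)
  have heq := le_antisymm hle
    (Nat.le_of_dvd (Nat.pos_of_dvd_of_pos hdvd (Nat.pos_of_ne_zero hm)) (Nat.dvd_lcm_right _ _))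
  exact heq ▸ Nat.dvd_lcm_left f (coprimePart m u)

lemma orderOf_natCast_pos {l L : ℕ} (hL : 0 < L) (h : Nat.Coprime L l) :
    0 < orderOf (l : ZMod L) := by
  have : NeZero L := ⟨hL.ne'⟩
  rw [← ZMod.coe_unitOfCoprime l h.symm, orderOf_units]
  exact orderOf_pos _

/-- With `t` the order modulo `f`, the powers of `l ^ t` modulo `L` lie among the `L / f` residues
`1 + f * j`. -/
lemma orderOf_natCast_le {l f L : ℕ} (hL : 0 < L) (hfL : f ∣ L) (h : Nat.Coprime L l)
    (hl : 0 < l) :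
    orderOf (l : ZMod L) ≤ orderOf (l : ZMod f) * (L / f) := by
  have : NeZero L := ⟨hL.ne'⟩
  have hf : 0 < f := Nat.pos_of_dvd_of_pos hfL hL
  have hLf : 0 < L / f := Nat.div_pos (Nat.le_of_dvd hL hfL) hf
  set t := orderOf (l : ZMod f) with ht
  have htpos : 0 < t := orderOf_natCast_pos hf (Nat.Coprime.coprime_dvd_left hfL h)
  set a : ZMod L := (l : ZMod L) ^ t with ha
  have hapos : 0 < orderOf a := by
    have := orderOf_natCast_pos hL (h.pow_right t)
    rwa [Nat.cast_pow] at this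
  have hmem : ∀ i ∈ Finset.range (orderOf a),
      a ^ i ∈ (Finset.range (L / f)).image (fun j : ℕ => (1 : ZMod L) + (f : ZMod L) * (j : ZMod L)) := by
    intro i _
    have h1 : (l ^ (t * i) : ℕ) ≡ 1 [MOD f] := by
      rw [← ZMod.natCast_eq_natCast_iff]
      push_cast
      rw [pow_mul, ht, pow_orderOf_eq_one, one_pow]
    obtain ⟨q, hq⟩ := (Nat.modEq_iff_dvd' (Nat.one_le_pow _ _ hl)).1 h1.symm
    have hq' : l ^ (t * i) = 1 + f * q := by
      have := Nat.one_le_pow (t * i) l hl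
      omega
    refine Finset.mem_image.2 ⟨q % (L / f), Finset.mem_range.2 (Nat.mod_lt _ hLf), ?_⟩
    have hq2 : 1 + f * q = 1 + f * (q % (L / f)) + L * (q / (L / f)) := by
      conv_lhs => rw [← Nat.mod_add_div q (L / f)]
      rw [mul_add, ← mul_assoc, Nat.mul_div_cancel' hfL, add_assoc]
    have h3 := congrArg (Nat.cast : ℕ → ZMod L) (hq'.trans hq2)
    push_cast at h3
    rw [ZMod.natCast_self, zero_mul, add_zero] at h3
    rw [ha, ← pow_mul, h3]
  have hcard : orderOf a ≤ L / f := by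
    have h1 := Finset.card_le_card_of_injOn (fun i => a ^ i) hmem (by
      intro i hi j hj hij
      exact pow_injOn_Iio_orderOf (by simpa using hi) (by simpa using hj) hij)
    have h2 := h1.trans Finset.card_image_le
    simpa using h2
  have hdvd : orderOf (l : ZMod L) ∣ t * orderOf a := by
    apply orderOf_dvd_of_pow_eq_one
    rw [pow_mul, ← ha, pow_orderOf_eq_one]
  exact (Nat.le_of_dvd (Nat.mul_pos htpos hapos) hdvd).trans (Nat.mul_le_mul_left _ hcard)

/-- The `f`-torsion is the kernel of the `f`-th power map, whose image contains the `f`-th power of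
an element of order the exponent. -/
lemma card_torsion_mul_le (G : Type*) [CommGroup G] [Fintype G] [DecidableEq G] {f : ℕ}
    (hf : f ∣ Monoid.exponent G) :
    (Finset.univ.filter (fun g : G => g ^ f = 1)).card * (Monoid.exponent G / f)
      ≤ Fintype.card G := by
  have hexp : 0 < Monoid.exponent G := Monoid.exponent_pos.2 Monoid.ExponentExists.of_finite
  have hf0 : f ≠ 0 := (Nat.pos_of_dvd_of_pos hf hexp).ne'
  obtain ⟨g, hg⟩ := Monoid.exists_orderOf_eq_exponent (G := G) Monoid.ExponentExists.of_finite
  have hord : orderOf (g ^ f) = Monoid.exponent G / f := by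
    rw [orderOf_pow_of_dvd hf0 (hg ▸ hf), hg]
  set φ : G →* G := powMonoidHom f
  have hker : (Finset.univ.filter (fun g : G => g ^ f = 1)).card = Nat.card φ.ker := by
    rw [← Fintype.card_subtype, ← Nat.card_eq_fintype_card]
    exact Nat.card_congr (Equiv.subtypeEquivRight fun x => by simp [φ, MonoidHom.mem_ker])
  have hrange : Monoid.exponent G / f ≤ Nat.card φ.range := by
    rw [← hord]
    exact Subgroup.orderOf_le_card _ (Set.toFinite _) ⟨g, rfl⟩
  rw [hker]
  refine (Nat.mul_le_mul_left _ hrange).trans ?_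
  rw [← Subgroup.index_ker φ, Subgroup.card_mul_index, Nat.card_eq_fintype_card]

lemma orbit_iterate_eq {α : Type*} {F : α → α} {u : α} (hu : u ∈ Function.periodicPts F) (i : ℕ) :
    {v | ∃ k : ℕ, F^[k] (F^[i] u) = v} = {v | ∃ k : ℕ, F^[k] u = v} := by
  obtain ⟨p, hp, hpu⟩ := hu
  ext v
  constructor
  · rintro ⟨k, rfl⟩
    exact ⟨k + i, Function.iterate_add_apply _ _ _ _⟩
  · rintro ⟨k, rfl⟩
    -- Going round the cycle `i` times before taking `k` steps passes the point `F^[i] u`.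
    have hle : i ≤ p * i := Nat.le_mul_of_pos_left i hp
    refine ⟨k + p * i - i, ?_⟩
    rw [← Function.iterate_add_apply, show k + p * i - i + i = k + p * i by omega,
      Function.iterate_add_apply, (hpu.mul_const i).eq]

lemma powMap_iterate {R : Type*} [Monoid R] (l k : ℕ) (x : R) :
    (fun x : R => x ^ l)^[k] x = x ^ (l ^ k) := by
  rw [pow_iterate]

/-- Every cycle has a representative `e * w` with `e` idempotent and `w` a unit of order coprime
to `l`: that order divides `l ^ k - 1`, where `k` is a period. -/
lemma exists_cycle_data {l n : ℕ} (hl : 2 ≤ l) {S : Set (ZMod n)}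
    (hS : S ∈ cycleSet l n) :
    ∃ (u e : ZMod n) (w : (ZMod n)ˣ), u ∈ Function.periodicPts (fun x : ZMod n => x ^ l) ∧
      S = {v | ∃ k : ℕ, (fun x : ZMod n => x ^ l)^[k] u = v} ∧
      e * e = e ∧ u = e * w ∧ Nat.Coprime (orderOf w) l := by
  obtain ⟨u, hu, hSu⟩ := hS
  obtain ⟨k, hk, hku⟩ := hu
  have h1 : 1 < l ^ k := Nat.one_lt_pow (by omega) (by omega)
  have h2 : u ^ (l ^ k - 1 + 1) = u := by
    rw [Nat.sub_add_cancel h1.le, ← powMap_iterate]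
    exact hku
  obtain ⟨e, w, he, huw, hw⟩ := exists_idempotent_unit (Nat.sub_pos_of_lt h1) h2
  refine ⟨u, e, w, ⟨k, hk, hku⟩, hSu, he, huw, ?_⟩
  have h3 : Nat.Coprime (l ^ k - 1) (l ^ k) :=
    (Nat.coprime_self_sub_left h1.le).2 (Nat.coprime_one_left _)
  exact (h3.coprime_dvd_left (orderOf_dvd_of_pow_eq_one hw)).coprime_dvd_right
    (dvd_pow_self l (by omega))

/-- For any `ℓ, n ≥ 2`, `C(ℓ, n) ≤ n τ(λ(n)) τ(n) / ord*(ℓ, λ(n))`, where `τ` is the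
number-of-divisors function. -/
theorem numCycles_upper_bound (ℓ n : ℕ) (hℓ : 2 ≤ ℓ) (hn : 2 ≤ n) :
    (numCycles ℓ n : ℝ) ≤
      (n : ℝ) * ((lam n).divisors.card : ℝ) * (n.divisors.card : ℝ) /
        (ordStar ℓ (lam n) : ℝ) := by
  classical
  have : NeZero n := ⟨by omega⟩
  have hlam : 0 < lam n := Monoid.exponent_pos.2 Monoid.ExponentExists.of_finite
  obtain ⟨hLdvd, hLco⟩ := coprimePart_coprime hlam.ne' ℓ
  set L := coprimePart (lam n) ℓ with hL
  have hLpos : 0 < L := Nat.pos_of_dvd_of_pos hLdvd hlam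
  have hTpos : 0 < ordStar ℓ (lam n) := orderOf_natCast_pos hLpos hLco
  have hdata := fun S (hS : S ∈ cycleSet ℓ n) => exists_cycle_data hℓ hS
  choose! u e w hper hS he hu hco using hdata
  have hfin : (cycleSet ℓ n).Finite := Set.toFinite _
  set A : Finset (Set (ZMod n)) := hfin.toFinset with hA
  have hAcard : numCycles ℓ n = A.card := Set.ncard_eq_toFinset_card _ hfin
  have hmemA : ∀ S, S ∈ A ↔ S ∈ cycleSet ℓ n := fun S => hfin.mem_toFinset
  have hbound : A.card ≤ n / ordStar ℓ (lam n) * (n.divisors ×ˢ (lam n).divisors).card := by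
    refine Finset.card_le_mul_card_image_of_maps_to
      (f := fun S => (Nat.gcd (e S).val n, orderOf (w S))) ?_ _ ?_
    · intro S _
      simp only [Finset.mem_product, Nat.mem_divisors]
      exact ⟨⟨Nat.gcd_dvd_right _ _, by omega⟩, Monoid.order_dvd_exponent _, hlam.ne'⟩
    · rintro ⟨d, f⟩ _
      -- It remains to bound the class of cycles with invariants `(d, f)`.
      rw [Nat.le_div_iff_mul_le hTpos]
      set B := A.filter (fun S => (Nat.gcd (e S).val n, orderOf (w S)) = (d, f)) with hB
      have hBmem : ∀ S ∈ B, S ∈ cycleSet ℓ n ∧ Nat.gcd (e S).val n = d ∧ orderOf (w S) = f := by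
        intro S hSB
        have := Finset.mem_filter.1 hSB
        exact ⟨(hmemA S).1 this.1, by simpa using this.2⟩
      rcases B.eq_empty_or_nonempty with hempty | ⟨S₀, hS₀⟩
      · simp [hempty]
      obtain ⟨hS₀c, -, hS₀f⟩ := hBmem S₀ hS₀
      have hfco : Nat.Coprime f ℓ := hS₀f ▸ hco S₀ hS₀c
      have hflam : f ∣ lam n := hS₀f ▸ Monoid.order_dvd_exponent _
      have hfL : f ∣ L := dvd_coprimePart hlam.ne' hflam hfco
      set t := orderOf (ℓ : ZMod f) with ht
      -- `w ^ (ℓ ^ i)` and the common idempotent determine a point of the cycle, hence the cycle;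
      -- `i` is then determined modulo `t` because `w` has order `f`.
      have hinj : B.card * t ≤
          (Finset.univ.filter (fun g : (ZMod n)ˣ => g ^ f = 1)).card := by
        rw [← Finset.card_range t, ← Finset.card_product]
        refine Finset.card_le_card_of_injOn (fun x => w x.1 ^ (ℓ ^ x.2)) ?_ ?_
        · rintro ⟨S, i⟩ hx
          simp only [Finset.coe_product, Set.mem_prod, Finset.mem_coe] at hx
          simp only [Finset.coe_filter, Finset.mem_univ, true_and, Set.mem_ofPred_eq]
          rw [← pow_mul, mul_comm, pow_mul, ← (hBmem S hx.1).2.2, pow_orderOf_eq_one, one_pow]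
        · rintro ⟨S, i⟩ hx ⟨S', j⟩ hy hxy
          simp only [Finset.coe_product, Set.mem_prod, Finset.mem_coe, Finset.mem_range] at hx hy
          simp only at hxy
          obtain ⟨hSc, hSd, hSf⟩ := hBmem S hx.1
          obtain ⟨hSc', hSd', hSf'⟩ := hBmem S' hy.1
          have hee : e S = e S' :=
            idempotent_eq_of_gcd_eq (he S hSc) (he S' hSc') (hSd.trans hSd'.symm)
          have hpow : ∀ (S) (_ : S ∈ cycleSet ℓ n) (i : ℕ),
              (fun x : ZMod n => x ^ ℓ)^[i] (u S) = e S * ((w S ^ (ℓ ^ i) : (ZMod n)ˣ) : ZMod n) := by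
            intro S hSc i
            rw [powMap_iterate]
            conv_lhs => rw [hu S hSc]
            rw [mul_pow, Units.val_pow_eq_pow_val,
              IsIdempotentElem.pow_eq (he S hSc) (pow_ne_zero i (by omega))]
          have hSS : S = S' := by
            rw [hS S hSc, hS S' hSc', ← orbit_iterate_eq (hper S hSc) i,
              ← orbit_iterate_eq (hper S' hSc') j, hpow S hSc, hpow S' hSc', hxy, hee]
          subst hSS
          have hmod := pow_eq_pow_iff_modEq.1 hxy
          rw [hSf, ← ZMod.natCast_eq_natCast_iff] at hmod
          push_cast at hmod
          rw [pow_injOn_Iio_orderOf (Set.mem_Iio.2 hx.2) (Set.mem_Iio.2 hy.2) hmod]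
      have hT : ordStar ℓ (lam n) ≤ t * (L / f) := orderOf_natCast_le hLpos hfL hLco (by omega)
      calc B.card * ordStar ℓ (lam n) ≤ B.card * (t * (L / f)) := Nat.mul_le_mul_left _ hT
        _ = B.card * t * (L / f) := by ring
        _ ≤ (Finset.univ.filter (fun g : (ZMod n)ˣ => g ^ f = 1)).card * (lam n / f) :=
          Nat.mul_le_mul hinj (Nat.div_le_div_right (Nat.le_of_dvd hlam hLdvd))
        _ ≤ Fintype.card (ZMod n)ˣ := card_torsion_mul_le _ hflam
        _ ≤ n := by
          rw [ZMod.card_units_eq_totient]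
          exact Nat.totient_le n
  rw [le_div_iff₀ (by exact_mod_cast hTpos), hAcard]
  rw [Finset.card_product] at hbound
  have hfinal : A.card * ordStar ℓ (lam n) ≤ n * (lam n).divisors.card * n.divisors.card :=
    calc A.card * ordStar ℓ (lam n)
        ≤ n / ordStar ℓ (lam n) * (n.divisors.card * (lam n).divisors.card) * ordStar ℓ (lam n) :=
          Nat.mul_le_mul_right _ hbound
      _ = n / ordStar ℓ (lam n) * ordStar ℓ (lam n) *
          ((lam n).divisors.card * n.divisors.card) := by ring
      _ ≤ n * ((lam n).divisors.card * n.divisors.card) :=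
          Nat.mul_le_mul_right _ (Nat.div_mul_le_self _ _)
      _ = n * (lam n).divisors.card * n.divisors.card := by ring
  exact_mod_cast hfinal
end
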